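/- For every k > 0 and every γ > 0 there exists a function β : [0, ∞) → ℝ such that: (1) β is C^∞, non-increasing, and satisfies −k ≤ β'(t)·t ≤ 0 for all t ≥ 0; (2) β is supported in [0, k], i.e. β(t) = 0 for all t ≥ k; (3) β(0) = e^γ − 1 > 0. -/

import Mathlib

/-!
The bound on `β'(t) * t` is a Lipschitz bound for `β` in the variable `log t`, and `(0, k]` has
infinite length in that variable. A transition from `e^γ - 1` to `0` can therefore be made as gentle
as desired by spreading it over a long range of scales. Replacing `log (t ^ 2)` by
`log (1 + a * t ^ 2)` with `a` large removes the singularity at `0`.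
-/

open Real Set

theorem deriv_smoothTransition_of_nonpos {x : ℝ} (hx : x ≤ 0) : deriv smoothTransition x = 0 := by
  have hmin : IsLocalMin smoothTransition x := .of_forall fun y ↦ by
    rw [smoothTransition.zero_of_nonpos hx]
    exact smoothTransition.nonneg y
  exact hmin.deriv_eq_zero

theorem deriv_smoothTransition_of_one_le {x : ℝ} (hx : 1 ≤ x) : deriv smoothTransition x = 0 := by
  have hmax : IsLocalMax smoothTransition x := .of_forall fun y ↦ by
    rw [smoothTransition.one_of_one_le hx]
    exact smoothTransition.le_one y
  exact hmax.deriv_eq_zero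

theorem hasCompactSupport_deriv_smoothTransition : HasCompactSupport (deriv smoothTransition) := by
  refine .intro (isCompact_Icc (a := 0) (b := 1)) fun x hx ↦ ?_
  rcases le_total x 0 with hx₀ | hx₀
  · exact deriv_smoothTransition_of_nonpos hx₀
  · exact deriv_smoothTransition_of_one_le (not_le.1 fun hx₁ ↦ hx ⟨hx₀, hx₁⟩).le

theorem exists_forall_deriv_smoothTransition_le : ∃ M, ∀ x, deriv smoothTransition x ≤ M := by
  have hcont : Continuous (deriv smoothTransition) :=
    (smoothTransition.contDiff (n := 1)).continuous_deriv le_rfl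
  obtain ⟨M, hM⟩ := hasCompactSupport_deriv_smoothTransition.exists_bound_of_continuous hcont
  exact ⟨M, fun x ↦ (le_abs_self _).trans (hM x)⟩

/-- A smooth even cutoff equal to `1` at `0`, whose transition takes place on a logarithmic scale:
`ε` is its speed in the variable `log (1 + a * t ^ 2)`, and a larger `a ≥ 0` shrinks its support. -/
noncomputable def logCutoff (ε a t : ℝ) : ℝ :=
  smoothTransition (1 - ε * log (1 + a * t ^ 2))

section LogCutoff

variable {ε a s t : ℝ}

theorem hasDerivAt_log_one_add_mul_sq (ha : 0 ≤ a) (t : ℝ) :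
    HasDerivAt (fun t ↦ log (1 + a * t ^ 2)) (2 * a * t / (1 + a * t ^ 2)) t := by
  have hinner : HasDerivAt (fun t ↦ 1 + a * t ^ 2) (2 * a * t) t :=
    (((hasDerivAt_pow 2 t).const_mul a).const_add 1).congr_deriv (by push_cast; ring)
  exact hinner.log (by positivity)

theorem logCutoff_zero_right (ε a : ℝ) : logCutoff ε a 0 = 1 := by
  simp [logCutoff]

theorem logCutoff_nonneg (ε a t : ℝ) : 0 ≤ logCutoff ε a t :=
  smoothTransition.nonneg _

theorem logCutoff_eq_zero_iff : logCutoff ε a t = 0 ↔ 1 ≤ ε * log (1 + a * t ^ 2) := by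
  rw [logCutoff, smoothTransition.zero_iff_nonpos, sub_nonpos]

theorem contDiff_logCutoff (ε : ℝ) (ha : 0 ≤ a) {n : ℕ∞} : ContDiff ℝ n (logCutoff ε a) := by
  have hlog : ContDiff ℝ n fun t ↦ log (1 + a * t ^ 2) :=
    ContDiff.log (by fun_prop) fun t ↦ by positivity
  exact smoothTransition.contDiff.comp (contDiff_const.sub (contDiff_const.mul hlog))

theorem logCutoff_le_of_abs_le (hε : 0 ≤ ε) (ha : 0 ≤ a) (hst : |s| ≤ |t|) :
    logCutoff ε a t ≤ logCutoff ε a s := by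
  have hsq : s ^ 2 ≤ t ^ 2 := sq_le_sq.2 hst
  apply smoothTransition.monotone
  gcongr

theorem deriv_logCutoff (ε : ℝ) (ha : 0 ≤ a) (t : ℝ) :
    deriv (logCutoff ε a) t =
      -(deriv smoothTransition (1 - ε * log (1 + a * t ^ 2)) *
        (ε * (2 * a * t / (1 + a * t ^ 2)))) := by
  have houter : DifferentiableAt ℝ smoothTransition (1 - ε * log (1 + a * t ^ 2)) :=
    (smoothTransition.contDiffAt (n := 1)).differentiableAt one_ne_zero
  have hinner := ((hasDerivAt_log_one_add_mul_sq ha t).const_mul ε).const_sub 1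
  rw [← mul_neg]
  exact (houter.hasDerivAt.comp t hinner).deriv

theorem deriv_logCutoff_mul_self_mem_Icc {M : ℝ} (hM : ∀ x, deriv smoothTransition x ≤ M)
    (hε : 0 ≤ ε) (ha : 0 ≤ a) (t : ℝ) :
    deriv (logCutoff ε a) t * t ∈ Icc (-(2 * M * ε)) 0 := by
  set d := deriv smoothTransition (1 - ε * log (1 + a * t ^ 2)) with hd
  set q := a * t ^ 2 / (1 + a * t ^ 2) with hq
  have hd_nonneg : 0 ≤ d := smoothTransition.monotone.deriv_nonneg
  have hd_le : d ≤ M := hM _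
  have hq_nonneg : 0 ≤ q := by positivity
  have hq_le : q ≤ 1 := (div_le_one (by positivity)).2 (by linarith)
  have heq : deriv (logCutoff ε a) t * t = -(2 * (d * q) * ε) := by
    rw [deriv_logCutoff ε ha, ← hd, hq]
    ring
  have hdq_nonneg : 0 ≤ d * q := mul_nonneg hd_nonneg hq_nonneg
  have hdq_le : d * q ≤ M := (mul_le_of_le_one_right hd_nonneg hq_le).trans hd_le
  rw [heq]
  exact ⟨by gcongr, neg_nonpos.2 (mul_nonneg (mul_nonneg zero_le_two hdq_nonneg) hε)⟩

theorem exists_logCutoff_eq_zero_of_le_abs {r : ℝ} (hε : 0 < ε) (hr : 0 < r) :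
    ∃ a, 0 ≤ a ∧ ∀ t, r ≤ |t| → logCutoff ε a t = 0 := by
  have ha : 0 ≤ exp ε⁻¹ / r ^ 2 := by positivity
  refine ⟨exp ε⁻¹ / r ^ 2, ha, fun t hrt ↦ ?_⟩
  have hlog : ε⁻¹ ≤ log (1 + exp ε⁻¹ / r ^ 2 * r ^ 2) := by
    rw [div_mul_cancel₀ _ (by positivity), le_log_iff_exp_le (by positivity)]
    linarith
  have hzero : logCutoff ε (exp ε⁻¹ / r ^ 2) r = 0 :=
    logCutoff_eq_zero_iff.2 ((inv_le_iff_one_le_mul₀' hε).1 hlog)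
  have hle := logCutoff_le_of_abs_le hε.le ha ((abs_of_pos hr).trans_le hrt)
  exact le_antisymm (hle.trans_eq hzero) (logCutoff_nonneg _ _ _)

end LogCutoff

theorem exists_bump_general {A c r : ℝ} (hA : 0 ≤ A) (hc : 0 < c) (hr : 0 < r) :
    ∃ β : ℝ → ℝ,
      ContDiff ℝ (⊤ : ℕ∞) β ∧
      (∀ s t, |s| ≤ |t| → β t ≤ β s) ∧
      (∀ t, deriv β t * t ∈ Icc (-c) 0) ∧
      (∀ t, r ≤ |t| → β t = 0) ∧
      β 0 = A := by
  obtain ⟨M, hM⟩ := exists_forall_deriv_smoothTransition_le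
  obtain ⟨ε, hε, hεc⟩ := exists_pos_mul_lt hc (A * (2 * M))
  obtain ⟨a, ha, hzero⟩ := exists_logCutoff_eq_zero_of_le_abs hε hr
  refine ⟨fun t ↦ A * logCutoff ε a t, contDiff_const.mul (contDiff_logCutoff ε ha),
    fun s t hst ↦ mul_le_mul_of_nonneg_left (logCutoff_le_of_abs_le hε.le ha hst) hA,
    fun t ↦ ?_, fun t ht ↦ mul_eq_zero_of_right A (hzero t ht),
    by simp [logCutoff_zero_right]⟩
  obtain ⟨hlower, hupper⟩ := deriv_logCutoff_mul_self_mem_Icc hM hε.le ha t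
  rw [deriv_const_mul_field, mul_assoc]
  refine ⟨?_, mul_nonpos_of_nonneg_of_nonpos hA hupper⟩
  calc -c ≤ A * -(2 * M * ε) := by linarith
    _ ≤ A * (deriv (logCutoff ε a) t * t) := by gcongr

/-- bump-function sublemma: for every k > 0 and γ > 0 there is a C^∞,
non-increasing function β on [0, ∞) with −k ≤ β'(t)·t ≤ 0, supported in [0, k],
and with β(0) = e^γ − 1 > 0. -/
theorem exists_bump (k γ : ℝ) (hk : 0 < k) (hγ : 0 < γ) :
    ∃ β : ℝ → ℝ,
      ContDiff ℝ (⊤ : ℕ∞) β ∧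
      (∀ s t : ℝ, 0 ≤ s → s ≤ t → β t ≤ β s) ∧
      (∀ t : ℝ, 0 ≤ t → -k ≤ deriv β t * t ∧ deriv β t * t ≤ 0) ∧
      (∀ t : ℝ, k ≤ t → β t = 0) ∧
      β 0 = Real.exp γ - 1 ∧ 0 < Real.exp γ - 1 := by
  have hA : 0 < Real.exp γ - 1 := sub_pos.2 (one_lt_exp_iff.2 hγ)
  obtain ⟨β, hsmooth, hanti, hderiv, hsupp, hβ₀⟩ := exists_bump_general hA.le hk hk
  exact ⟨β, hsmooth, fun s t hs hst ↦ hanti s t (abs_le_abs_of_nonneg hs hst),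
    fun t _ ↦ hderiv t, fun t ht ↦ hsupp t (ht.trans (le_abs_self t)), hβ₀, hA⟩
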